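/- Let P ∈ ℝ^{n×n} be a nonnegative, row-stochastic, irreducible matrix with stationary distribution π > 0, defined over a strongly connected weighted graph with travel times w_{ij} ∈ ℤ_{>0} on edges (w_{ij} = 0 and p_{ij} = 0 off edges), and let F_k(i,i) be the first return probabilities defined by the recursion F_k(i,j) = p_{ij}·1{k = w_{ij}} + Σ_{h≠j} p_{ih} F_{k−w_{ih}}(h,j) for k ≥ 1, F_k = 0 for k ≤ 0. Then the expected first return time of every state i satisfies 𝔼[T_{ii}] = Σ_{k=1}^∞ k·F_k(i,i) = π^T (P ∘ W) 𝟙_n / π_i, where ∘ denotes the Hadamard (entrywise) product; in particular, for unitary travel times 𝔼[T_{ii}] = 1/π_i. -/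

import Mathlib

open scoped BigOperators

/-- The first hitting time probabilities `F_k(i,j)` for a chain `P` with travel
times `W`: `F_k(i,j) = p_{ij}·1{k = w_{ij}} + Σ_{h≠j} p_{ih} F_{k−w_{ih}}(h,j)`
for `k ≥ 1`, and `F_k = 0` for `k ≤ 0`. -/
def IsHittingProb {n : ℕ} (P : Matrix (Fin n) (Fin n) ℝ)
    (W : Matrix (Fin n) (Fin n) ℕ) (F : ℤ → Fin n → Fin n → ℝ) : Prop :=
  (∀ k : ℤ, k ≤ 0 → ∀ i j, F k i j = 0) ∧
    ∀ k : ℤ, 1 ≤ k → ∀ i j,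
      F k i j = (if k = (W i j : ℤ) then P i j else 0) +
        ∑ h : Fin n, if h = j then 0 else P i h * F (k - (W i h : ℤ)) h j

/-!
Place the traveller in the stationary regime: for each `r < W i h`, mass `π i * P i h` is on the
edge `(i, h)` and arrives at `h` at time `r + 1`; the total mass is `πᵀ (P ∘ W) 𝟙`. Let `D t` be the
mass that does not visit `j` at any of the times `1, …, t`. Looking at the regime one time unit
later instead, `D t - D (t + 1)` is the mass at `j` at time `1` that takes longer than `t` to
return, so `D t - D (t + 1) = π j * ℙ(T > t)`. Since `D t → 0` by irreducibility, the sum telescopes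
to `π j * 𝔼[T] = π j * ∑ t, ℙ(T > t) = D 0 = πᵀ (P ∘ W) 𝟙`.
-/

open Filter Finset Matrix Topology

theorem hasSum_succ_mul_sub_of_antitone {g : ℕ → ℝ} {s : ℝ} (hg : Antitone g) (hs : HasSum g s) :
    HasSum (fun k : ℕ => ((k : ℝ) + 1) * (g k - g (k + 1))) s := by
  have hlim : Tendsto g atTop (𝓝 0) := hs.summable.tendsto_atTop_zero
  have hnonneg (k : ℕ) : 0 ≤ g k := hg.le_of_tendsto hlim k
  have hpartial (n : ℕ) : ∑ k ∈ range n, ((k : ℝ) + 1) * (g k - g (k + 1)) =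
      ∑' k, if k < n then g k - g n else 0 := by
    rw [tsum_eq_sum (s := range n) fun k hk => if_neg (mt mem_range.mpr hk),
      sum_congr rfl fun k hk => if_pos (mem_range.mp hk)]
    induction n with
    | zero => simp
    | succ n ih =>
      rw [sum_range_succ, ih, sum_range_succ]
      simp only [sum_sub_distrib, sum_const, card_range, nsmul_eq_mul]
      ring
  rw [hasSum_iff_tendsto_nat_of_nonneg
    fun k => mul_nonneg (by positivity) (sub_nonneg.mpr (hg k.le_succ))]
  simp only [hpartial, ← hs.tsum_eq]
  refine tendsto_tsum_of_dominated_convergence hs.summable (fun k => ?_) (.of_forall fun n k => ?_)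
  · have hsub : Tendsto (fun n => g k - g n) atTop (𝓝 (g k)) := by
      simpa only [sub_zero] using hlim.const_sub (g k)
    refine hsub.congr' ?_
    filter_upwards [eventually_gt_atTop k] with n hn
    rw [if_pos hn]
  · split_ifs with hk
    · rw [Real.norm_of_nonneg (sub_nonneg.mpr (hg hk.le))]
      exact sub_le_self _ (hnonneg n)
    · simpa only [norm_zero] using hnonneg k

section Survival

/-- The survival function `t ↦ ℙ(T > t)` of a random time `T ≥ 0` with law `φ`. -/
noncomputable def survival (φ : ℤ → ℝ) (t : ℤ) : ℝ := 1 - ∑ k ∈ Icc 0 t, φ k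

variable {φ : ℤ → ℝ}

theorem survival_of_neg {t : ℤ} (ht : t < 0) : survival φ t = 1 := by
  rw [survival, Icc_eq_empty_of_lt ht, sum_empty, sub_zero]

theorem survival_single_zero {t : ℤ} (ht : 0 ≤ t) : survival (Pi.single 0 1) t = 0 := by
  simp only [survival, sum_pi_single', left_mem_Icc, ht, if_true, sub_self]

theorem survival_sub_survival_add_one {t : ℤ} (ht : -1 ≤ t) :
    survival φ t - survival φ (t + 1) = φ (t + 1) := by
  rw [survival, survival, ← insert_Icc_right_eq_Icc_add_one (by lia), sum_insert (by simp)]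
  ring

theorem antitone_survival (hφ : ∀ k, 0 ≤ φ k) : Antitone (survival φ) := fun _ _ hst =>
  sub_le_sub_left (sum_le_sum_of_subset_of_nonneg (Icc_subset_Icc_right hst) fun k _ _ => hφ k) 1

theorem survival_comp_sub (hφ : ∀ k < 0, φ k = 0) (w : ℕ) (t : ℤ) :
    survival (fun k => φ (k - w)) t = survival φ (t - w) := by
  refine congrArg (1 - ·) (sum_of_injOn (· + (w : ℤ)) (add_left_injective _).injOn ?_ ?_ ?_).symm
  · intro k hk
    simp only [coe_Icc, Set.mem_Icc] at hk ⊢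
    lia
  · intro k hk hk'
    refine hφ _ (not_le.mp fun hwk => hk' ⟨k - w, ?_, sub_add_cancel k _⟩)
    simp only [coe_Icc, Set.mem_Icc, mem_Icc] at hk ⊢
    lia
  · intro k _
    rw [add_sub_cancel_right]

end Survival

section ArrivalLaw

variable {ι : Type*} [DecidableEq ι] {j : ι} {f : ι → ℤ → ℝ}

/-- The law of the remaining travel time to `j` of a chain that has just arrived at `h`: unlike the
first passage law `f h`, it counts a visit to `j` at time `0`. -/
def arrivalLaw (j : ι) (f : ι → ℤ → ℝ) : ι → ℤ → ℝ := Function.update f j (Pi.single 0 1)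

theorem arrivalLaw_self : arrivalLaw j f j = Pi.single 0 1 := Function.update_self ..

theorem arrivalLaw_of_ne {h : ι} (hh : h ≠ j) : arrivalLaw j f h = f h :=
  Function.update_of_ne hh ..

theorem arrivalLaw_nonneg {h : ι} {k : ℤ} (hf : 0 ≤ f h k) : 0 ≤ arrivalLaw j f h k := by
  obtain rfl | hh := eq_or_ne h j
  · rw [arrivalLaw_self, Pi.single_apply]
    positivity
  · rwa [arrivalLaw_of_ne hh]

theorem survival_arrivalLaw {t : ℤ} (ht : 0 ≤ t) :
    (fun h => survival (arrivalLaw j f h) t) =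
      Function.update (fun h => survival (f h) t) j 0 := by
  ext h
  obtain rfl | hh := eq_or_ne h j
  · rw [arrivalLaw_self, survival_single_zero ht, Function.update_self]
  · rw [arrivalLaw_of_ne hh, Function.update_of_ne hh]

theorem survival_arrivalLaw_nonneg {h : ι} {t : ℤ} (hf : 0 ≤ survival (f h) t) :
    0 ≤ survival (arrivalLaw j f h) t := by
  obtain ht | ht := lt_or_ge t 0
  · exact (survival_of_neg ht).symm ▸ zero_le_one
  · rw [congrFun (survival_arrivalLaw ht) h, Function.update_apply]
    split_ifs
    exacts [le_rfl, hf]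

theorem tendsto_survival_arrivalLaw {limit : ι → ℝ}
    (hf : ∀ i, Tendsto (survival (f i)) atTop (𝓝 (limit i))) (h : ι) :
    Tendsto (survival (arrivalLaw j f h)) atTop (𝓝 (Function.update limit j 0 h)) := by
  have hupdate := (tendsto_pi_nhds.mpr hf).update j (tendsto_const_nhds (x := (0 : ℝ)))
  refine (tendsto_pi_nhds.mp hupdate h).congr' ?_
  filter_upwards [eventually_ge_atTop 0] with t ht
  exact (congrFun (survival_arrivalLaw ht) h).symm

end ArrivalLaw

theorem dotProduct_sub_dotProduct_update {ι R : Type*} [Fintype ι] [DecidableEq ι] [Ring R]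
    (π x : ι → R) (j : ι) (c : R) :
    π ⬝ᵥ x - π ⬝ᵥ Function.update x j c = π j * (x j - c) := by
  rw [← dotProduct_sub, dotProduct, sum_eq_single_of_mem j (mem_univ j)]
  · simp only [Pi.sub_apply, Function.update_self]
  · intro i _ hij
    rw [Pi.sub_apply, Function.update_of_ne hij, sub_self, mul_zero]

section NonnegMatrix

variable {ι R : Type*} [Fintype ι] [Ring R] [LinearOrder R] [IsStrictOrderedRing R]
  {P : Matrix ι ι R}

theorem nonneg_of_eq_sum_mul_delay {W : ι → ι → ℕ} {x y : ι → ℤ → R} (hP : ∀ i h, 0 ≤ P i h)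
    (hW : ∀ i h, P i h ≠ 0 → 1 ≤ W i h) (hinit : ∀ i, ∀ k ≤ 0, 0 ≤ x i k)
    (hrec : ∀ i k, x i k = ∑ h, P i h * y h (k - W i h))
    (hxy : ∀ h k, 0 ≤ x h k → 0 ≤ y h k) (i : ι) (k : ℤ) : 0 ≤ x i k := by
  suffices ∀ N : ℕ, ∀ i, ∀ k ≤ (N : ℤ), 0 ≤ x i k from this k.toNat i k k.self_le_toNat
  intro N
  induction N with
  | zero => exact_mod_cast hinit
  | succ N ih =>
    intro i k hk
    rw [hrec]
    refine sum_nonneg fun h _ => ?_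
    obtain hzero | hedge := eq_or_ne (P i h) 0
    · rw [hzero, zero_mul]
    · have hdelay := hW i h hedge
      exact mul_nonneg (hP i h) (hxy h _ (ih h _ (by lia)))

theorem eq_zero_of_isIrreducible_of_mulVec_eq_self (hP : P.IsIrreducible) {x : ι → R}
    (hx : ∀ i, 0 ≤ x i) (hfix : P *ᵥ x = x) {j : ι} (hj : x j = 0) : x = 0 := by
  classical
  have hpow (m : ℕ) : P ^ m *ᵥ x = x := by
    induction m with
    | zero => rw [pow_zero, one_mulVec]
    | succ m ih => rw [pow_succ, ← mulVec_mulVec, hfix, ih]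
  ext i
  obtain ⟨m, -, hm⟩ := (isIrreducible_iff_exists_pow_pos hP.nonneg).mp hP j i
  have hsum : ∑ h, (P ^ m) j h * x h = 0 := (congrFun (hpow m) j).trans hj
  rw [sum_eq_zero_iff_of_nonneg
    fun h _ => mul_nonneg (pow_apply_nonneg hP.nonneg m j h) (hx h)] at hsum
  exact (mul_eq_zero.mp (hsum i (mem_univ i))).resolve_left hm.ne'

theorem eq_zero_of_eq_mulVec_update [DecidableEq ι] (hP : P.IsIrreducible) {π : ι → R}
    (hπ : π ᵥ* P = π) {j : ι} (hj : π j ≠ 0) {x : ι → R} (hx : ∀ i, 0 ≤ x i)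
    (hfix : x = P *ᵥ Function.update x j 0) : x = 0 := by
  have hbalance : π ⬝ᵥ x = π ⬝ᵥ Function.update x j 0 := by
    conv_lhs => rw [hfix, dotProduct_mulVec, hπ]
  have hmul : π j * x j = 0 := by
    rw [← sub_zero (x j), ← dotProduct_sub_dotProduct_update, hbalance, sub_self]
  have hxj : x j = 0 := (mul_eq_zero.mp hmul).resolve_left hj
  have hupdate : Function.update x j 0 = x := Function.update_eq_self_iff.mpr hxj.symm
  rw [hupdate] at hfix
  exact eq_zero_of_isIrreducible_of_mulVec_eq_self hP hx hfix.symm hxj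

end NonnegMatrix

variable {ι : Type*} [Fintype ι] [DecidableEq ι] {P : Matrix ι ι ℝ} {W : Matrix ι ι ℕ} {j : ι}
  {f : ι → ℤ → ℝ} {π : ι → ℝ}

/-- `f i` is the law of the travel time of the chain from `i` to its first visit to the target `j`
after leaving `i`. This is `IsHittingProb P W F` for one target, with `f i k = F k i j`. -/
structure IsFirstPassageLaw (P : Matrix ι ι ℝ) (W : Matrix ι ι ℕ) (j : ι) (f : ι → ℤ → ℝ) :
    Prop where
  eq_zero_of_nonpos : ∀ k : ℤ, k ≤ 0 → ∀ i, f i k = 0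
  eq_add_sum : ∀ k : ℤ, 1 ≤ k → ∀ i,
    f i k = (if k = (W i j : ℤ) then P i j else 0) +
      ∑ h, if h = j then 0 else P i h * f h (k - (W i h : ℤ))

/-- The stationary mass that does not visit `j` at any of the times `1, …, t`: for each `r < W i h`,
mass `π i * P i h` is on the edge `(i, h)` at time `0` and arrives at `h` at time `r + 1`. -/
noncomputable def transitSurvival (π : ι → ℝ) (P : Matrix ι ι ℝ) (W : Matrix ι ι ℕ) (j : ι)
    (f : ι → ℤ → ℝ) (t : ℤ) : ℝ :=
  ∑ i, π i * ∑ h, P i h * ∑ r ∈ range (W i h), survival (arrivalLaw j f h) (t - (r + 1 : ℕ))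

theorem transitSurvival_zero :
    transitSurvival π P W j f 0 = ∑ i, π i * ∑ h, P i h * (W i h : ℝ) := by
  refine sum_congr rfl fun i _ => congrArg _ (sum_congr rfl fun h _ => congrArg _ ?_)
  rw [sum_congr rfl fun r _ => survival_of_neg (by lia), sum_const, card_range, nsmul_one]

namespace IsFirstPassageLaw

theorem arrivalLaw_of_neg (hf : IsFirstPassageLaw P W j f) (h : ι) {k : ℤ} (hk : k < 0) :
    arrivalLaw j f h k = 0 := by
  obtain rfl | hh := eq_or_ne h j
  · rw [arrivalLaw_self, Pi.single_eq_of_ne hk.ne]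
  · rw [arrivalLaw_of_ne hh, hf.eq_zero_of_nonpos k hk.le]

theorem eq_sum_arrivalLaw (hf : IsFirstPassageLaw P W j f) (hW : ∀ i h, P i h ≠ 0 → 1 ≤ W i h)
    (i : ι) (k : ℤ) : f i k = ∑ h, P i h * arrivalLaw j f h (k - W i h) := by
  obtain hk | hk := le_or_gt k 0
  · rw [hf.eq_zero_of_nonpos k hk, sum_eq_zero fun h _ => ?_]
    obtain hzero | hedge := eq_or_ne (P i h) 0
    · rw [hzero, zero_mul]
    · have hdelay := hW i h hedge
      rw [hf.arrivalLaw_of_neg h (by lia), mul_zero]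
  · rw [hf.eq_add_sum k hk, ← Fintype.sum_ite_eq' j fun h => if k = W i h then P i h else 0,
      ← sum_add_distrib]
    refine sum_congr rfl fun h _ => ?_
    obtain rfl | hh := eq_or_ne h j
    · simp [arrivalLaw_self, Pi.single_apply, sub_eq_zero]
    · simp only [hh, if_false, zero_add, arrivalLaw_of_ne hh]

theorem nonneg (hf : IsFirstPassageLaw P W j f) (hP : ∀ i h, 0 ≤ P i h)
    (hW : ∀ i h, P i h ≠ 0 → 1 ≤ W i h) : ∀ i k, 0 ≤ f i k :=
  nonneg_of_eq_sum_mul_delay hP hW (fun i k hk => (hf.eq_zero_of_nonpos k hk i).ge)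
    (hf.eq_sum_arrivalLaw hW) fun _ _ => arrivalLaw_nonneg

theorem survival_eq_sum (hf : IsFirstPassageLaw P W j f) (hrow : ∀ i, ∑ h, P i h = 1)
    (hW : ∀ i h, P i h ≠ 0 → 1 ≤ W i h) (i : ι) (t : ℤ) :
    survival (f i) t = ∑ h, P i h * survival (arrivalLaw j f h) (t - W i h) := by
  simp_rw [← survival_comp_sub fun k => hf.arrivalLaw_of_neg _ (k := k)]
  simp only [survival, mul_sub, mul_one, sum_sub_distrib, hrow, hf.eq_sum_arrivalLaw hW i, mul_sum]
  rw [sum_comm]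

theorem survival_nonneg (hf : IsFirstPassageLaw P W j f) (hP : ∀ i h, 0 ≤ P i h)
    (hrow : ∀ i, ∑ h, P i h = 1) (hW : ∀ i h, P i h ≠ 0 → 1 ≤ W i h) :
    ∀ i t, 0 ≤ survival (f i) t := by
  refine nonneg_of_eq_sum_mul_delay hP hW (fun i t ht => ?_) (hf.survival_eq_sum hrow hW)
    fun _ _ => survival_arrivalLaw_nonneg
  rw [survival, sum_eq_zero fun k hk => hf.eq_zero_of_nonpos k ((mem_Icc.mp hk).2.trans ht) i,
    sub_zero]
  exact zero_le_one

theorem tendsto_survival (hf : IsFirstPassageLaw P W j f) (hP : P.IsIrreducible)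
    (hrow : ∀ i, ∑ h, P i h = 1) (hW : ∀ i h, P i h ≠ 0 → 1 ≤ W i h) (hπ : π ᵥ* P = π)
    (hj : π j ≠ 0) (i : ι) : Tendsto (survival (f i)) atTop (𝓝 0) := by
  have hnonneg := hf.survival_nonneg hP.nonneg hrow hW
  choose limit hlimit using fun i => (⟨_, tendsto_atTop_ciInf
    (antitone_survival (hf.nonneg hP.nonneg hW i)) ⟨0, Set.forall_mem_range.mpr (hnonneg i)⟩⟩ :
      ∃ l, Tendsto (survival (f i)) atTop (𝓝 l))
  have hfix : limit = P *ᵥ Function.update limit j 0 := by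
    ext i
    refine tendsto_nhds_unique (hlimit i) ?_
    rw [funext (hf.survival_eq_sum hrow hW i)]
    exact tendsto_finsetSum _ fun h _ => .const_mul _ <|
      (tendsto_survival_arrivalLaw hlimit h).comp (tendsto_atTop_add_const_right _ _ tendsto_id)
  have hzero : limit = 0 :=
    eq_zero_of_eq_mulVec_update hP hπ hj (fun i => ge_of_tendsto' (hlimit i) (hnonneg i)) hfix
  simpa only [hzero, Pi.zero_apply] using hlimit i

theorem tendsto_transitSurvival (hf : IsFirstPassageLaw P W j f) (hP : P.IsIrreducible)
    (hrow : ∀ i, ∑ h, P i h = 1) (hW : ∀ i h, P i h ≠ 0 → 1 ≤ W i h) (hπ : π ᵥ* P = π)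
    (hj : π j ≠ 0) : Tendsto (transitSurvival π P W j f) atTop (𝓝 0) := by
  have harrival (h : ι) : Tendsto (survival (arrivalLaw j f h)) atTop (𝓝 0) := by
    simpa only [Function.update_zero, Pi.zero_apply] using
      tendsto_survival_arrivalLaw (j := j) (limit := 0) (hf.tendsto_survival hP hrow hW hπ hj) h
  have hsum : Tendsto (transitSurvival π P W j f) atTop
      (𝓝 (∑ i, π i * ∑ h, P i h * ∑ r ∈ range (W i h), 0)) :=
    tendsto_finsetSum _ fun i _ => .const_mul _ <| tendsto_finsetSum _ fun h _ => .const_mul _ <|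
      tendsto_finsetSum _ fun r _ =>
        (harrival h).comp (tendsto_atTop_add_const_right _ _ tendsto_id)
  simpa only [sum_const_zero, mul_zero] using hsum

theorem transitSurvival_sub (hf : IsFirstPassageLaw P W j f) (hrow : ∀ i, ∑ h, P i h = 1)
    (hW : ∀ i h, P i h ≠ 0 → 1 ≤ W i h) (hπ : π ᵥ* P = π) {t : ℤ} (ht : 0 ≤ t) :
    transitSurvival π P W j f t - transitSurvival π P W j f (t + 1) =
      π j * survival (f j) t := by
  have hedge (i h : ι) : ∑ r ∈ range (W i h), survival (arrivalLaw j f h) (t - (r + 1 : ℕ)) -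
      ∑ r ∈ range (W i h), survival (arrivalLaw j f h) (t + 1 - (r + 1 : ℕ)) =
        survival (arrivalLaw j f h) (t - W i h) - survival (arrivalLaw j f h) t := by
    simpa [sum_sub_distrib] using
      sum_range_sub (fun r : ℕ => survival (arrivalLaw j f h) (t - r)) (W i h)
  calc transitSurvival π P W j f t - transitSurvival π P W j f (t + 1)
      = π ⬝ᵥ (fun i => survival (f i) t) -
          π ⬝ᵥ P *ᵥ (fun h => survival (arrivalLaw j f h) t) := by
        simp only [transitSurvival, dotProduct, mulVec, ← sum_sub_distrib, ← mul_sub, hedge,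
          hf.survival_eq_sum hrow hW]
    _ = π j * survival (f j) t := by
        rw [dotProduct_mulVec, hπ, survival_arrivalLaw ht,
          dotProduct_sub_dotProduct_update, sub_zero]

theorem hasSum_survival_self (hf : IsFirstPassageLaw P W j f) (hP : P.IsIrreducible)
    (hrow : ∀ i, ∑ h, P i h = 1) (hW : ∀ i h, P i h ≠ 0 → 1 ≤ W i h) (hπ : π ᵥ* P = π)
    (hj : π j ≠ 0) :
    HasSum (fun t : ℕ => survival (f j) t) ((∑ i, π i * ∑ h, P i h * (W i h : ℝ)) / π j) := by
  have hpartial (n : ℕ) : ∑ t ∈ range n, survival (f j) t =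
      (transitSurvival π P W j f 0 - transitSurvival π P W j f n) / π j := by
    rw [eq_div_iff hj, mul_comm, mul_sum, ← Nat.cast_zero,
      ← sum_range_sub' fun t : ℕ => transitSurvival π P W j f t]
    refine sum_congr rfl fun t _ => ?_
    rw [Nat.cast_add_one, hf.transitSurvival_sub hrow hW hπ t.cast_nonneg]
  rw [hasSum_iff_tendsto_nat_of_nonneg fun t => hf.survival_nonneg hP.nonneg hrow hW j t,
    funext hpartial, ← transitSurvival_zero (j := j) (f := f)]
  have hlim := (hf.tendsto_transitSurvival hP hrow hW hπ hj).comp tendsto_natCast_atTop_atTop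
  simpa only [sub_zero, Function.comp_def] using
    (hlim.const_sub (transitSurvival π P W j f 0)).div_const (π j)

theorem hasSum_mul_self (hf : IsFirstPassageLaw P W j f) (hP : P.IsIrreducible)
    (hrow : ∀ i, ∑ h, P i h = 1) (hW : ∀ i h, P i h ≠ 0 → 1 ≤ W i h) (hπ : π ᵥ* P = π)
    (hj : π j ≠ 0) :
    HasSum (fun k : ℕ => (k : ℝ) * f j k) ((∑ i, π i * ∑ h, P i h * (W i h : ℝ)) / π j) := by
  have hanti : Antitone fun t : ℕ => survival (f j) t :=
    (antitone_survival (hf.nonneg hP.nonneg hW j)).comp_monotone Nat.mono_cast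
  have htail := hasSum_succ_mul_sub_of_antitone hanti (hf.hasSum_survival_self hP hrow hW hπ hj)
  have hsucc : HasSum (fun k : ℕ => ((k + 1 : ℕ) : ℝ) * f j (k + 1 : ℕ)) _ :=
    htail.congr_fun fun k => by
      push_cast
      rw [survival_sub_survival_add_one (by lia)]
  simpa only [sum_range_one, Nat.cast_zero, zero_mul, add_zero] using
    (hasSum_nat_add_iff (f := fun k : ℕ => (k : ℝ) * f j k) 1).mp hsucc

end IsFirstPassageLaw

theorem expected_return_time_general (hP : P.IsIrreducible) (hrow : ∀ i, ∑ h, P i h = 1)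
    (hW : ∀ i h, 0 < P i h → 1 ≤ W i h) (hπ : π ᵥ* P = π) (hπ0 : ∀ i, π i ≠ 0)
    {F : ℤ → ι → ι → ℝ} (hF : ∀ j, IsFirstPassageLaw P W j fun i k => F k i j) :
    (∀ i, HasSum (fun k : ℕ => (k : ℝ) * F k i i)
        ((∑ a, π a * ∑ b, P a b * (W a b : ℝ)) / π i)) ∧
      ((∀ i j, 0 < P i j → W i j = 1) →
        ∀ i, HasSum (fun k : ℕ => (k : ℝ) * F k i i) ((∑ a, π a) / π i)) := by
  have hpos {i h : ι} (hih : P i h ≠ 0) : 0 < P i h := (hP.nonneg i h).lt_of_ne' hih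
  have hmain (i : ι) := (hF i).hasSum_mul_self hP hrow (fun _ _ h => hW _ _ (hpos h)) hπ (hπ0 i)
  refine ⟨hmain, fun hunit i => ?_⟩
  have hmean (a : ι) : ∑ b, P a b * (W a b : ℝ) = 1 := by
    rw [← hrow a]
    refine sum_congr rfl fun b _ => ?_
    obtain hzero | hab := eq_or_ne (P a b) 0
    · rw [hzero, zero_mul]
    · rw [hunit a b (hpos hab), Nat.cast_one, mul_one]
  simpa only [hmean, mul_one] using hmain i

/-- for an irreducible stochastic `P` with stationary
distribution `π > 0` over a strongly connected weighted graph with positive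
integer travel times on edges, the expected first return time of every state
`i` is `𝔼[T_ii] = Σ_{k≥1} k·F_k(i,i) = πᵀ(P ∘ W)𝟙 / π_i`; in particular, for
unitary travel times `𝔼[T_ii] = 1/π_i`. -/
theorem expected_return_time {n : ℕ}
    (P : Matrix (Fin n) (Fin n) ℝ) (W : Matrix (Fin n) (Fin n) ℕ)
    (pivec : Fin n → ℝ)
    (hnonneg : ∀ i j, 0 ≤ P i j)
    (hrow : ∀ i, ∑ j, P i j = 1)
    (hirr : ∀ i j, ∃ m : ℕ, 0 < m ∧ 0 < (P ^ m) i j)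
    (hW1 : ∀ i j, 0 < P i j → 1 ≤ W i j)
    (hW0 : ∀ i j, ¬ 0 < P i j → W i j = 0 ∧ P i j = 0)
    (hpi : ∀ i, 0 < pivec i) (hpisum : ∑ i, pivec i = 1)
    (hstat : ∀ j, ∑ i, pivec i * P i j = pivec j)
    (F : ℤ → Fin n → Fin n → ℝ) (hF : IsHittingProb P W F) :
    (∀ i : Fin n,
      HasSum (fun k : ℕ => (k : ℝ) * F (k : ℤ) i i)
        ((∑ a : Fin n, pivec a * ∑ b : Fin n, P a b * (W a b : ℝ)) / pivec i)) ∧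
    ((∀ i j, 0 < P i j → W i j = 1) →
      ∀ i : Fin n, HasSum (fun k : ℕ => (k : ℝ) * F (k : ℤ) i i) (1 / pivec i)) := by
  have hgeneral := expected_return_time_general
    ((isIrreducible_iff_exists_pow_pos hnonneg).mpr hirr) hrow hW1 (funext hstat)
    (fun i => (hpi i).ne') fun j => ⟨fun k hk i => hF.1 k hk i j, fun k hk i => hF.2 k hk i j⟩
  rwa [hpisum] at hgeneral
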